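/- arXiv:2603.23982 — 6 statements merged into one kernel-verified Lean document; each statement's English description precedes it below -/
import Mathlib

section
/- Let S be a right group, let E := E(S) be its set of idempotents, and fix e₀ ∈ E. Then E is a nonempty subsemigroup of S that is a right zero semigroup, the left ideal G := S·e₀ is a group under the induced operation with identity e₀, and the map G × E → S sending (a, e) to a·e is a semigroup isomorphism from the external direct product semigroup G × E (componentwise operation) onto S. -/
/-!
Left cancellation turns every idempotent into a left identity: cancel `e` in `e * (e * x) = e * x`.
Likewise `s * x = s` forces `x` to be idempotent, so solving this equation by right simplicity
gives the idempotent component of `s`, and `s = (s * e₀) * x` is the desired factorization.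
It is unique because right multiplication by `e₀` sends `a * e` to `a * e₀ = a`.
-/

section Semigroup

variable {S : Type*} [Semigroup S] {a e : S}

theorem mul_mem_range_mul_right (s : S) (ha : a ∈ Set.range (· * e)) :
    s * a ∈ Set.range (· * e) := by
  obtain ⟨t, rfl⟩ := ha
  exact ⟨s * t, mul_assoc s t e⟩

/-- The principal left ideal `S * e`, bundled as a subsemigroup so that it carries the induced
multiplication. It contains `e` when `e` is idempotent, but need not in general. -/
def principalLeftIdeal (e : S) : Subsemigroup S where
  carrier := Set.range (· * e)
  mul_mem' {a _} _ hb := mul_mem_range_mul_right a hb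

theorem mul_eq_left_of_mem_principalLeftIdeal (he : IsIdempotentElem e)
    (ha : a ∈ principalLeftIdeal e) : a * e = a := by
  obtain ⟨s, rfl⟩ := ha
  exact he.mul_mul_self s

end Semigroup

section LeftCancelSemigroup

variable {S : Type*} [Semigroup S] [IsLeftCancelMul S] {a b e s x : S}

theorem mul_eq_right_of_isIdempotentElem (he : IsIdempotentElem e) (x : S) : e * x = x :=
  mul_left_cancel (he.mul_self_mul x)

theorem isIdempotentElem_of_mul_eq_left (h : s * x = s) : IsIdempotentElem x :=
  mul_left_cancel (a := s) (by rw [← mul_assoc, h, h])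

theorem mul_eq_of_mul_eq_of_isIdempotentElem (he : IsIdempotentElem e) (hae : a * e = a)
    (hab : a * b = e) : b * a = e :=
  mul_left_cancel <| calc
    a * (b * a) = e * a := by rw [← mul_assoc, hab]
    _ = a := mul_eq_right_of_isIdempotentElem he a
    _ = a * e := hae.symm

theorem exists_inverse_mem_principalLeftIdeal (he : IsIdempotentElem e)
    (ha : a ∈ principalLeftIdeal e) (hx : a * x = e) :
    ∃ b ∈ principalLeftIdeal e, a * b = e ∧ b * a = e := by
  have hxe : a * (x * e) = e := by rw [← mul_assoc, hx, he.eq]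
  exact ⟨x * e, ⟨x, rfl⟩, hxe, mul_eq_of_mul_eq_of_isIdempotentElem he
    (mul_eq_left_of_mem_principalLeftIdeal he ha) hxe⟩

variable (S) in
/-- The idempotents of a left cancellative semigroup, which form a right zero subsemigroup. -/
def idempotentSubsemigroup : Subsemigroup S where
  carrier := {a | IsIdempotentElem a}
  mul_mem' {a b} ha hb := by
    rw [mul_eq_right_of_isIdempotentElem ha b]
    exact hb

/-- The multiplication map `(a, f) ↦ a * f` from the external direct product of `S * e` and the
semigroup of idempotents to `S`. -/
def principalLeftIdealMulIdempotent (e : S) :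
    principalLeftIdeal e × idempotentSubsemigroup S →ₙ* S where
  toFun p := p.1 * p.2
  map_mul' := by
    rintro ⟨⟨a, _⟩, ⟨f, hf⟩⟩ ⟨⟨a', _⟩, ⟨f', _⟩⟩
    change a * a' * (f * f') = a * f * (a' * f')
    have hf_mul := mul_eq_right_of_isIdempotentElem hf
    rw [hf_mul f', mul_assoc a f, hf_mul, mul_assoc]

theorem principalLeftIdealMulIdempotent_injective (he : IsIdempotentElem e) :
    Function.Injective (principalLeftIdealMulIdempotent e) := by
  have mul_mul_eq {a f : S} (ha : a ∈ principalLeftIdeal e) (hf : IsIdempotentElem f) :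
      a * f * e = a := by
    rw [mul_assoc, mul_eq_right_of_isIdempotentElem hf,
      mul_eq_left_of_mem_principalLeftIdeal he ha]
  rintro ⟨⟨a, ha⟩, ⟨f, hf⟩⟩ ⟨⟨a', ha'⟩, ⟨f', hf'⟩⟩ (h : a * f = a' * f')
  obtain rfl : a = a' := by rw [← mul_mul_eq ha hf, h, mul_mul_eq ha' hf']
  obtain rfl : f = f' := mul_left_cancel h
  rfl

theorem principalLeftIdealMulIdempotent_surjective (he : IsIdempotentElem e)
    (hS : ∀ s : S, ∃ x, s * x = s) :
    Function.Surjective (principalLeftIdealMulIdempotent e) := by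
  intro s
  obtain ⟨x, hx⟩ := hS s
  refine ⟨(⟨s * e, s, rfl⟩, ⟨x, isIdempotentElem_of_mul_eq_left hx⟩), ?_⟩
  calc
    s * e * x = s * (e * x) := mul_assoc s e x
    _ = s * x := by rw [mul_eq_right_of_isIdempotentElem he]
    _ = s := hx

end LeftCancelSemigroup

/-- Theorem 1.1 (c) ⇒ (d): if `S` is a right group and `e₀` is an idempotent, then the
set `E` of idempotents is a nonempty subsemigroup that is a right zero semigroup, the
left ideal `G = S·e₀` is a group with identity `e₀`, and `(a, e) ↦ a * e` is a semigroup
isomorphism from the external direct product `G × E` (componentwise operation) onto `S`. -/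
theorem stmt_1 (S : Type*) [Semigroup S] [Nonempty S]
    (hrs : ∀ a b : S, ∃ x : S, a * x = b)
    (hlc : ∀ a b c : S, a * b = a * c → b = c)
    (e₀ : S) (he₀ : e₀ * e₀ = e₀) :
    let E : Set S := {a : S | a * a = a}
    let G : Set S := {a : S | ∃ s : S, s * e₀ = a}
    -- E is a nonempty subsemigroup of S which is a right zero semigroup
    E.Nonempty ∧
    (∀ a ∈ E, ∀ b ∈ E, a * b ∈ E ∧ a * b = b) ∧
    -- G = S·e₀ is a left ideal, closed under multiplication, and a group with identity e₀
    (∀ s : S, ∀ a ∈ G, s * a ∈ G) ∧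
    (∀ a ∈ G, ∀ b ∈ G, a * b ∈ G) ∧
    e₀ ∈ G ∧
    (∀ a ∈ G, e₀ * a = a ∧ a * e₀ = a) ∧
    (∀ a ∈ G, ∃ b ∈ G, a * b = e₀ ∧ b * a = e₀) ∧
    -- (a, e) ↦ a * e is a semigroup isomorphism G × E → S (componentwise operation on G × E)
    Function.Bijective (fun p : G × E => (p.1 : S) * (p.2 : S)) ∧
    (∀ a a' : G, ∀ e e' : E,
      ((a : S) * (a' : S)) * ((e : S) * (e' : S)) = ((a : S) * (e : S)) * ((a' : S) * (e' : S))) := by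
  intro E G
  have : IsLeftCancelMul S := ⟨hlc⟩
  have left_id {e : S} (he : e ∈ E) (x : S) : e * x = x := mul_eq_right_of_isIdempotentElem he x
  refine ⟨⟨e₀, he₀⟩, fun a ha b hb => ⟨(idempotentSubsemigroup S).mul_mem ha hb, left_id ha b⟩,
    fun s _ ha => mul_mem_range_mul_right s ha,
    fun _ ha _ hb => (principalLeftIdeal e₀).mul_mem ha hb, ⟨e₀, he₀⟩,
    fun a ha => ⟨left_id he₀ a, mul_eq_left_of_mem_principalLeftIdeal he₀ ha⟩, ?_, ?_, ?_⟩
  · intro a ha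
    obtain ⟨x, hx⟩ := hrs a e₀
    exact exists_inverse_mem_principalLeftIdeal he₀ ha hx
  · exact ⟨principalLeftIdealMulIdempotent_injective he₀,
      principalLeftIdealMulIdempotent_surjective he₀ fun s => hrs s s⟩
  · intro a a' e e'
    exact (principalLeftIdealMulIdempotent e₀).map_mul (a, e) (a', e')
end

section
/- Let S be a right group, e ∈ E(S), r_e: S → Se the map r_e(s) = s·e, and π_E: S → E(S) the map sending s to the unique idempotent f with s·f = s. Then (S, r_e, π_E) is a product of Se and E(S) in the category of semigroups: for every semigroup T and all semigroup morphisms f_e: T → Se and f_E: T → E(S), there exists a unique semigroup morphism f: T → S such that r_e ∘ f = f_e and π_E ∘ f = f_E. -/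
/-!
Idempotents of a left cancellative semigroup are left identities. So if `s * i = s` with `i`
idempotent, then `s = s * (e * i) = (s * e) * i`: an element is recovered from its two projections
by multiplying them. This forces `f t = fe t * fE t`, which is multiplicative because each `fE t`
disappears when followed by another factor.
-/

section LeftIdentities

variable {S T : Type*} [Semigroup S]

theorem mul_eq_of_isLeftRegular_of_isIdempotentElem {i : S} (hreg : IsLeftRegular i)
    (hi : IsIdempotentElem i) (x : S) : i * x = x :=
  hreg (by simp only [← mul_assoc, hi.eq])

theorem mul_eq_and_mul_eq_self_iff_eq_mul {e i a s : S} (hei : e * i = i) (hie : i * e = e)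
    (ha : a * e = a) : s * e = a ∧ s * i = s ↔ s = a * i := by
  constructor
  · rintro ⟨hse, hsi⟩
    calc s = s * (e * i) := by rw [hei, hsi]
      _ = a * i := by rw [← mul_assoc, hse]
  · rintro rfl
    have hii : i * i = i :=
      calc i * i = i * e * i := by rw [mul_assoc, hei]
        _ = i := by rw [hie, hei]
    exact ⟨by rw [mul_assoc, hie, ha], by rw [mul_assoc, hii]⟩

/-- The pairing `t ↦ f t * g t` of two semigroup morphisms, where the values of `g` are left
identities. It plays the role of `⟨f, g⟩` in the universal property of the product. -/
def mulHomPairing [Mul T] (f g : T →ₙ* S) (hg : ∀ (t : T) (x : S), g t * x = x) : T →ₙ* S where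
  toFun t := f t * g t
  map_mul' a b := by simp only [map_mul, mul_assoc, hg]

theorem stmt_7_general [Mul T] {e : S} (he : ∀ x : S, e * x = x)
    (fe : T →ₙ* S) (hfe : ∀ t : T, ∃ s : S, s * e = fe t)
    (fE : T →ₙ* S) (hfE : ∀ (t : T) (x : S), fE t * x = x) :
    ∃! f : T →ₙ* S, (∀ t : T, f t * e = fe t) ∧ (∀ t : T, f t * fE t = f t) := by
  have fe_mul_e (t : T) : fe t * e = fe t := by
    obtain ⟨s, hs⟩ := hfe t
    rw [← hs, mul_assoc, he]
  have projections_iff (f : T →ₙ* S) :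
      ((∀ t, f t * e = fe t) ∧ ∀ t, f t * fE t = f t) ↔ f = mulHomPairing fe fE hfE := by
    rw [← forall_and, DFunLike.ext_iff]
    exact forall_congr' fun t ↦
      mul_eq_and_mul_eq_self_iff_eq_mul (he (fE t)) (hfE t e) (fe_mul_e t)
  simp only [projections_iff, existsUnique_eq]

end LeftIdentities

/-- Proposition (1): for a right group `S` and an idempotent `e`, `(S, r_e, π_E)` is the
product of `Se` and `E(S)` in the category of semigroups: for every semigroup `T` and
semigroup morphisms `f_e : T → Se ⊆ S` and `f_E : T → E(S) ⊆ S`, there is a unique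
semigroup morphism `f : T → S` with `r_e ∘ f = f_e` (i.e. `f t * e = f_e t`) and
`π_E ∘ f = f_E` (i.e. `f_E t` is the unique idempotent fixing `f t` on the right). -/
theorem stmt_7 (S : Type*) [Semigroup S] [Nonempty S]
    (hrs : ∀ a b : S, ∃ x : S, a * x = b)
    (hlc : ∀ a b c : S, a * b = a * c → b = c)
    (e : S) (he : e * e = e)
    (T : Type*) [Semigroup T]
    (fe : T →ₙ* S) (hfe : ∀ t : T, ∃ s : S, s * e = fe t)
    (fE : T →ₙ* S) (hfE : ∀ t : T, fE t * fE t = fE t) :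
    ∃! f : T →ₙ* S, (∀ t : T, f t * e = fe t) ∧ (∀ t : T, f t * fE t = f t) := by
  have idempotent_mul (i : S) (hi : i * i = i) : ∀ x : S, i * x = x :=
    mul_eq_of_isLeftRegular_of_isIdempotentElem (fun b c ↦ hlc i b c) hi
  exact stmt_7_general (idempotent_mul e he) fe hfe fE fun t ↦ idempotent_mul (fE t) (hfE t)
end

section
/- Let S be a right group, e ∈ E(S), E := E(S), and let ι_e: Se → S and ι_E: E → S be the inclusions. Then ((S, e), ι_e, ι_E) is the coproduct of (Se, e) and (E, e) in the category of pointed right groups: for every right group T with a chosen idempotent e_T ∈ E(T) and all semigroup morphisms f_e: Se → T and f_E: E → T with f_e(e) = e_T and f_E(e) = e_T, there exists a unique semigroup morphism ψ: S → T such that ψ ∘ ι_e = f_e and ψ ∘ ι_E = f_E. -/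
/-!
An element `x` of a left cancellative semigroup has at most one right unit `u` (`x * u = x`), and
such a `u` is idempotent. Idempotents are left identities, so `x = (x * e) * u` with `x * e ∈ Se`
and `u ∈ E`, which forces `ψ x = f_e (x * e) * f_E u`. This formula is multiplicative because
`f_E u` acts as a left identity on the image of `f_e`: it absorbs into `f_E e = f_e e`, as
`u * e = e`. Hence `S` is the pushout of `Se` and `E` over `{e}` in the category of semigroups.
-/

section RightUnit

variable {S : Type*} [Semigroup S] (hunit : ∀ a : S, ∃ u, a * u = a)

/-- The right unit of `a`, i.e. the element `u` with `a * u = a`. It is chosen from an existence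
hypothesis, and is unique when `S` is left cancellative. In a right group it is the component of
`a` in `E(S)` under the decomposition of `S` as `Se × E(S)`. -/
noncomputable def rightUnit (a : S) : S :=
  (hunit a).choose

theorem mul_rightUnit (a : S) : a * rightUnit hunit a = a :=
  (hunit a).choose_spec

variable [IsLeftCancelMul S] {a e u : S}

theorem idempotent_mul_eq_self (he : IsIdempotentElem e) (a : S) : e * a = a :=
  mul_left_cancel (a := e) (by rw [← mul_assoc, he.eq])

theorem isIdempotentElem_of_mul_eq_left_s8 (h : a * u = a) : IsIdempotentElem u :=
  mul_left_cancel (a := a) (by rw [← mul_assoc, h, h])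

theorem rightUnit_eq_of_mul_eq_left (h : a * u = a) : rightUnit hunit a = u :=
  mul_left_cancel ((mul_rightUnit hunit a).trans h.symm)

theorem isIdempotentElem_rightUnit (a : S) : IsIdempotentElem (rightUnit hunit a) :=
  isIdempotentElem_of_mul_eq_left_s8 (mul_rightUnit hunit a)

theorem rightUnit_mul (a b : S) : rightUnit hunit (a * b) = rightUnit hunit b :=
  rightUnit_eq_of_mul_eq_left hunit (by rw [mul_assoc, mul_rightUnit])

theorem mul_idempotent_mul_rightUnit (he : IsIdempotentElem e) (a : S) :
    a * e * rightUnit hunit a = a := by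
  rw [mul_assoc, idempotent_mul_eq_self he, mul_rightUnit]

end RightUnit

section Coproduct

variable {S T : Type*} [Semigroup S] [IsLeftCancelMul S] [Semigroup T] {e : S} {fe fE : S → T}

theorem mulHom_ext_of_eq_on_mul_right_of_eq_on_idempotents (hunit : ∀ a : S, ∃ u, a * u = a)
    (he : IsIdempotentElem e) {φ ψ : S →ₙ* T} (hSe : ∀ s, φ (s * e) = ψ (s * e))
    (hE : ∀ u, IsIdempotentElem u → φ u = ψ u) : φ = ψ := by
  ext x
  rw [← mul_idempotent_mul_rightUnit hunit he x, map_mul φ (x * e), map_mul ψ (x * e),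
    hSe, hE _ (isIdempotentElem_rightUnit hunit x)]

theorem map_idempotent_mul_map_mul_right (he : IsIdempotentElem e)
    (hfe : ∀ x y : S, (∃ s, s * e = x) → (∃ s, s * e = y) → fe (x * y) = fe x * fe y)
    (hfE : ∀ x y : S, IsIdempotentElem x → IsIdempotentElem y → fE (x * y) = fE x * fE y)
    (hglue : fe e = fE e) {u : S} (hu : IsIdempotentElem u) (s : S) :
    fE u * fe (s * e) = fe (s * e) := by
  have hfe_left_unit : fe e * fe (s * e) = fe (s * e) := by
    rw [← hfe e (s * e) ⟨e, he⟩ ⟨s, rfl⟩, idempotent_mul_eq_self he]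
  calc fE u * fe (s * e)
      = fE u * fE e * fe (s * e) := by rw [mul_assoc, ← hglue, hfe_left_unit]
    _ = fe e * fe (s * e) := by rw [← hfE u e hu he, idempotent_mul_eq_self hu, hglue]
    _ = fe (s * e) := hfe_left_unit

/-- The morphism `ψ` induced by `fe` on `Se` and `fE` on `E(S)` when they agree at `e`. The maps
are total functions on `S`, of which only the values on `Se` and on `E(S)` matter. -/
noncomputable def coprodDesc (hunit : ∀ a : S, ∃ u, a * u = a) (he : IsIdempotentElem e)
    (hfe : ∀ x y : S, (∃ s, s * e = x) → (∃ s, s * e = y) → fe (x * y) = fe x * fe y)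
    (hfE : ∀ x y : S, IsIdempotentElem x → IsIdempotentElem y → fE (x * y) = fE x * fE y)
    (hglue : fe e = fE e) : S →ₙ* T where
  toFun x := fe (x * e) * fE (rightUnit hunit x)
  map_mul' x y := by
    have mul_mul_e : x * y * e = x * e * (y * e) := by
      rw [mul_assoc x e, idempotent_mul_eq_self he, mul_assoc]
    calc fe (x * y * e) * fE (rightUnit hunit (x * y))
        = fe (x * e) * fe (y * e) * fE (rightUnit hunit y) := by
          rw [mul_mul_e, hfe _ _ ⟨x, rfl⟩ ⟨y, rfl⟩, rightUnit_mul]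
      _ = fe (x * e) * (fE (rightUnit hunit x) * fe (y * e)) * fE (rightUnit hunit y) := by
          rw [map_idempotent_mul_map_mul_right he hfe hfE hglue
            (isIdempotentElem_rightUnit hunit x)]
      _ = fe (x * e) * fE (rightUnit hunit x) * (fe (y * e) * fE (rightUnit hunit y)) := by
          simp only [mul_assoc]

variable (hunit : ∀ a : S, ∃ u, a * u = a) (he : IsIdempotentElem e)
  (hfe : ∀ x y : S, (∃ s, s * e = x) → (∃ s, s * e = y) → fe (x * y) = fe x * fe y)
  (hfE : ∀ x y : S, IsIdempotentElem x → IsIdempotentElem y → fE (x * y) = fE x * fE y)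
  (hglue : fe e = fE e)

theorem coprodDesc_mul_right (s : S) :
    coprodDesc hunit he hfe hfE hglue (s * e) = fe (s * e) := by
  have mul_e_mul_e : s * e * e = s * e := by rw [mul_assoc, he.eq]
  calc fe (s * e * e) * fE (rightUnit hunit (s * e))
      = fe (s * e) * fe e := by
        rw [mul_e_mul_e, rightUnit_eq_of_mul_eq_left hunit mul_e_mul_e, hglue]
    _ = fe (s * e) := by rw [← hfe _ _ ⟨s, rfl⟩ ⟨e, he⟩, mul_e_mul_e]

theorem coprodDesc_idempotent {u : S} (hu : IsIdempotentElem u) :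
    coprodDesc hunit he hfe hfE hglue u = fE u :=
  calc fe (u * e) * fE (rightUnit hunit u)
      = fE e * fE u := by
        rw [idempotent_mul_eq_self hu, rightUnit_eq_of_mul_eq_left hunit hu, hglue]
    _ = fE u := by rw [← hfE e u he hu, idempotent_mul_eq_self he]

end Coproduct

theorem stmt_8_general {S T : Type*} [Semigroup S] [IsLeftCancelMul S] [Semigroup T]
    (hunit : ∀ a : S, ∃ u, a * u = a) {e : S} (he : IsIdempotentElem e) {fe fE : S → T}
    (hfe : ∀ x y : S, (∃ s, s * e = x) → (∃ s, s * e = y) → fe (x * y) = fe x * fe y)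
    (hfE : ∀ x y : S, IsIdempotentElem x → IsIdempotentElem y → fE (x * y) = fE x * fE y)
    (hglue : fe e = fE e) :
    ∃! ψ : S →ₙ* T,
      (∀ x : S, (∃ s : S, s * e = x) → ψ x = fe x) ∧
      (∀ x : S, IsIdempotentElem x → ψ x = fE x) := by
  refine ⟨coprodDesc hunit he hfe hfE hglue, ⟨?_, ?_⟩, ?_⟩
  · rintro _ ⟨s, rfl⟩
    exact coprodDesc_mul_right hunit he hfe hfE hglue s
  · exact fun u hu => coprodDesc_idempotent hunit he hfe hfE hglue hu
  · rintro φ ⟨hφe, hφE⟩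
    refine mulHom_ext_of_eq_on_mul_right_of_eq_on_idempotents hunit he
      (fun s => ?_) (fun u hu => ?_)
    · rw [hφe _ ⟨s, rfl⟩, coprodDesc_mul_right]
    · rw [hφE u hu, coprodDesc_idempotent hunit he hfe hfE hglue hu]

/-- Proposition (2): for a right group `S` and an idempotent `e`, `((S, e), ι_e, ι_E)`
is the coproduct of `(Se, e)` and `(E(S), e)` in the category of pointed right groups:
for every right group `T` with chosen idempotent `e_T`, and all semigroup morphisms
`f_e : Se → T`, `f_E : E(S) → T` sending `e` to `e_T`, there is a unique semigroup
morphism `ψ : S → T` restricting to `f_e` on `Se` and to `f_E` on `E(S)`. -/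
theorem stmt_8 (S : Type*) [Semigroup S] [Nonempty S]
    (hrs : ∀ a b : S, ∃ x : S, a * x = b)
    (hlc : ∀ a b c : S, a * b = a * c → b = c)
    (e : S) (he : e * e = e)
    (T : Type*) [Semigroup T] (hneT : Nonempty T)
    (hrsT : ∀ a b : T, ∃ x : T, a * x = b)
    (hlcT : ∀ a b c : T, a * b = a * c → b = c)
    (eT : T) (heT : eT * eT = eT)
    (fe : S → T)
    (hfe_mul : ∀ x y : S, (∃ s : S, s * e = x) → (∃ s : S, s * e = y) →
      fe (x * y) = fe x * fe y)
    (hfe_e : fe e = eT)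
    (fE : S → T)
    (hfE_mul : ∀ x y : S, x * x = x → y * y = y → fE (x * y) = fE x * fE y)
    (hfE_e : fE e = eT) :
    ∃! ψ : S →ₙ* T,
      (∀ x : S, (∃ s : S, s * e = x) → ψ x = fe x) ∧
      (∀ x : S, x * x = x → ψ x = fE x) := by
  have : IsLeftCancelMul S := ⟨hlc⟩
  exact stmt_8_general (fun a => hrs a a) he hfe_mul hfE_mul (hfe_e.trans hfE_e.symm)
end

section
/- Let S be a right group, e ∈ E(S), E := E(S), and let ι_e: Se → S and ι_E: E → S be the inclusions. Then (S, ι_e, ι_E) is not a coproduct of Se and E in the category of semigroups: there exist a semigroup T and semigroup morphisms f_e: Se → T and f_E: E → T such that no semigroup morphism ω: S → T satisfies ω ∘ ι_e = f_e and ω ∘ ι_E = f_E. -/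
/-!
The idempotent `e = e * e` lies in both `Se` and `E(S)`, so a common extension of `f_e` and `f_E`
can exist only if `f_e e = f_E e`. Constant maps onto two different idempotents of `T` are
morphisms that violate this.
-/

/-- The constant morphism onto an idempotent `t`, the source of morphisms with a prescribed
value at a given point. -/
def constMulHom (S : Type*) {T : Type*} [Mul S] [Mul T] (t : T) (ht : IsIdempotentElem t) :
    S →ₙ* T where
  toFun _ := t
  map_mul' _ _ := ht.symm

theorem not_eqOn_and_eqOn_of_ne {α β : Type*} {A B : Set α} {f g : α → β} {x : α}
    (hx : x ∈ A ∩ B) (hfg : f x ≠ g x) (ω : α → β) : ¬ (Set.EqOn ω f A ∧ Set.EqOn ω g B) :=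
  fun ⟨hf, hg⟩ ↦ hfg ((hf hx.1).symm.trans (hg hx.2))

theorem stmt_9_general {S : Type*} [Mul S] {A B : Set S} (hAB : (A ∩ B).Nonempty) :
    ∃ (T : Type) (_ : Semigroup T) (f g : S →ₙ* T),
      ∀ ω : S → T, ¬ (Set.EqOn ω f A ∧ Set.EqOn ω g B) := by
  obtain ⟨x, hx⟩ := hAB
  exact ⟨ℕ, inferInstance, constMulHom S 0 .zero, constMulHom S 1 .one,
    not_eqOn_and_eqOn_of_ne hx zero_ne_one⟩

/-- Proposition (3): for a right group `S` and an idempotent `e`, `(S, ι_e, ι_E)` is not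
a coproduct of `Se` and `E(S)` in the category of semigroups: there exist a semigroup `T`
and semigroup morphisms `f_e : Se → T`, `f_E : E(S) → T` that admit no common extension
to a semigroup morphism `ω : S → T`. -/
theorem stmt_9 (S : Type*) [Semigroup S] [Nonempty S]
    (hrs : ∀ a b : S, ∃ x : S, a * x = b)
    (hlc : ∀ a b c : S, a * b = a * c → b = c)
    (e : S) (he : e * e = e) :
    ∃ (T : Type) (_ : Semigroup T) (fe fE : S → T),
      (∀ x y : S, (∃ s : S, s * e = x) → (∃ s : S, s * e = y) →
        fe (x * y) = fe x * fe y) ∧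
      (∀ x y : S, x * x = x → y * y = y → fE (x * y) = fE x * fE y) ∧
      ∀ ω : S →ₙ* T,
        ¬ ((∀ x : S, (∃ s : S, s * e = x) → ω x = fe x) ∧
           (∀ x : S, x * x = x → ω x = fE x)) := by
  obtain ⟨T, _, fe, fE, hω⟩ := stmt_9_general (A := {x | ∃ s, s * e = x}) (B := {x | x * x = x})
    ⟨e, ⟨e, he⟩, he⟩
  exact ⟨T, _, fe, fE, fun x y _ _ ↦ map_mul fe x y, fun x y _ _ ↦ map_mul fE x y, fun ω ↦ hω ω⟩
end

section
/- Let S be a right group with congruence ∼ and canonical projection π: S → S/∼. For each e₀ ∈ E(S), right multiplication by e₀ induces a semigroup morphism r̄_{e₀}: S/∼ → S (sending the class xE(S) to x·e₀) satisfying π ∘ r̄_{e₀} = id. The assignment e₀ ↦ r̄_{e₀} is a bijection from E(S) onto the set of all semigroup morphisms φ: S/∼ → S with π ∘ φ = id_{S/∼}. -/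
/-!
The idempotents of a right group are left identities, so `x ∼ y` iff `x * e = y * e` for any single
idempotent `e`, and `x * e ∼ x`. Hence right multiplication by `e` is an endomorphism that factors
through `π`, and the factor is a right inverse of `π`. Conversely, if `φ` is a multiplicative right
inverse of `π`, then `f = φ (π e)` is idempotent, and `x ∼ φ (π x)` gives
`x * f = φ (π x) * f = φ (π (x * e)) = φ (π x)`.
-/

theorem exists_mulHom_of_factorsThrough {M N P : Type*} [Mul M] [Mul N] [Mul P]
    {π : M →ₙ* N} (hsurj : Function.Surjective π) {f : M →ₙ* P}
    (hf : Function.FactorsThrough f π) : ∃ φ : N →ₙ* P, ∀ x, φ (π x) = f x := by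
  have hlift (x : M) : f (Function.surjInv hsurj (π x)) = f x :=
    hf (Function.surjInv_eq hsurj (π x))
  refine ⟨⟨fun q => f (Function.surjInv hsurj q), hsurj.forall₂.2 fun x y => ?_⟩, hlift⟩
  rw [← map_mul, hlift, hlift, hlift, map_mul]

section Semigroup

variable {S Q : Type*} [Semigroup S]

theorem mul_eq_of_isIdempotentElem [IsLeftCancelMul S] {e : S} (he : IsIdempotentElem e)
    (x : S) : e * x = x :=
  mul_left_cancel (a := e) (by rw [← mul_assoc, he.eq])

theorem exists_isIdempotentElem_mul_eq_iff
    (hE : ∀ e : S, IsIdempotentElem e → ∀ x, e * x = x) {e : S} (he : IsIdempotentElem e)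
    {x y : S} : (∃ f, IsIdempotentElem f ∧ x * f = y * f) ↔ x * e = y * e := by
  refine ⟨fun ⟨f, hf, hxy⟩ => ?_, fun hxy => ⟨e, he, hxy⟩⟩
  calc
    x * e = x * f * e := by rw [mul_assoc, hE f hf]
    _ = y * f * e := by rw [hxy]
    _ = y * e := by rw [mul_assoc, hE f hf]

/-- Right multiplication by a left identity `e`, as an endomorphism of the semigroup: the map
`r_e` that induces the right inverse of the canonical projection attached to `e`. -/
def mulRightHom (e : S) (he : ∀ x, e * x = x) : S →ₙ* S where
  toFun x := x * e
  map_mul' x y := by rw [mul_assoc x e, he, mul_assoc]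

theorem map_mul_right_eq {π : S → Q} {e : S} (he : IsIdempotentElem e)
    (hπ : ∀ x y, x * e = y * e → π x = π y) (x : S) : π (x * e) = π x :=
  hπ _ _ (by rw [mul_assoc, he.eq])

theorem exists_rightInverse_eq_mul_right [Mul Q] {π : S →ₙ* Q} (hsurj : Function.Surjective π)
    {e : S} (he : ∀ x, e * x = x) (hπ : ∀ x y, π x = π y ↔ x * e = y * e) :
    ∃ φ : Q →ₙ* S, (∀ x, φ (π x) = x * e) ∧ Function.RightInverse φ π := by
  obtain ⟨φ, hφ⟩ := exists_mulHom_of_factorsThrough hsurj (f := mulRightHom e he)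
    fun x y => (hπ x y).1
  refine ⟨φ, hφ, hsurj.forall.2 fun x => ?_⟩
  exact (congrArg π (hφ x)).trans (map_mul_right_eq (he e) (fun x y => (hπ x y).2) x)

end Semigroup

theorem rightInverse_map_eq_mul {S Q : Type*} [Mul S] [Mul Q] {π : S →ₙ* Q} {φ : Q →ₙ* S}
    (hφ : Function.RightInverse φ π) {e : S} (he : ∀ x, π (x * e) = π x)
    (hπ : ∀ x y, π x = π y → x * φ (π e) = y * φ (π e)) (x : S) :
    φ (π x) = x * φ (π e) :=
  calc
    φ (π x) = φ (π x) * φ (π e) := by rw [← map_mul, ← map_mul, he]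
    _ = x * φ (π e) := hπ _ _ (hφ (π x))

theorem stmt_12_general {S Q : Type*} [Semigroup S] [Nonempty S] [Mul Q]
    (hE : ∀ e : S, IsIdempotentElem e → ∀ x, e * x = x) (π : S →ₙ* Q)
    (hsurj : Function.Surjective π)
    (hker : ∀ x y, π x = π y ↔ ∃ e, IsIdempotentElem e ∧ x * e = y * e) :
    (∀ e₀ : S, IsIdempotentElem e₀ →
      ∃ φ : Q →ₙ* S, (∀ x, φ (π x) = x * e₀) ∧ Function.RightInverse φ π) ∧
    (∀ φ : Q →ₙ* S, Function.RightInverse φ π →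
      ∃! e₀ : S, IsIdempotentElem e₀ ∧ ∀ x, φ (π x) = x * e₀) := by
  have hπ {e : S} (he : IsIdempotentElem e) (x y : S) : π x = π y ↔ x * e = y * e :=
    (hker x y).trans (exists_isIdempotentElem_mul_eq_iff hE he)
  refine ⟨fun e he => exists_rightInverse_eq_mul_right hsurj (hE e he) (hπ he), fun φ hφ => ?_⟩
  -- Reflexivity of the kernel of `π` provides an idempotent.
  obtain ⟨e, he, -⟩ := (hker (Classical.arbitrary S) _).1 rfl
  have hφe : IsIdempotentElem (φ (π e)) := (he.map π).map φ
  refine ⟨φ (π e), ⟨hφe, ?_⟩, fun f ⟨_, hf⟩ => ?_⟩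
  · exact rightInverse_map_eq_mul hφ (map_mul_right_eq he fun x y => (hπ he x y).2)
      fun x y => (hπ hφe x y).1
  · rw [hf e, hE e he]

/-- Proposition on right inverses of the canonical projection: let `S` be a right group
and `π : S → Q` a realization of the canonical projection `S → S/∼` (a surjective
semigroup morphism whose kernel is the congruence `∼`). For each idempotent `e₀`, right
multiplication by `e₀` induces a semigroup morphism `r̄_{e₀} : Q → S` (sending the class
of `x` to `x·e₀`) which is a right inverse of `π`, and `e₀ ↦ r̄_{e₀}` is a bijection
from `E(S)` onto the set of semigroup morphisms `φ : Q → S` with `π ∘ φ = id`. -/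
theorem stmt_12 (S : Type*) [Semigroup S] [Nonempty S]
    (hrs : ∀ a b : S, ∃ x : S, a * x = b)
    (hlc : ∀ a b c : S, a * b = a * c → b = c)
    (Q : Type*) [Semigroup Q] (π : S →ₙ* Q)
    (hsurj : Function.Surjective π)
    (hker : ∀ x y : S, π x = π y ↔ ∃ e : S, e * e = e ∧ x * e = y * e) :
    -- each idempotent e₀ yields a right inverse r̄_{e₀} of π, induced by r_{e₀}
    (∀ e₀ : S, e₀ * e₀ = e₀ →
      ∃ φ : Q →ₙ* S, (∀ x : S, φ (π x) = x * e₀) ∧ ∀ q : Q, π (φ q) = q) ∧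
    -- and every right inverse of π arises in this way from exactly one idempotent
    (∀ φ : Q →ₙ* S, (∀ q : Q, π (φ q) = q) →
      ∃! e₀ : S, e₀ * e₀ = e₀ ∧ ∀ x : S, φ (π x) = x * e₀) := by
  have : IsLeftCancelMul S := ⟨fun a => hlc a⟩
  exact stmt_12_general (fun _ he => mul_eq_of_isIdempotentElem he) π hsurj hker
end

section
/- Let G be a group, X a nonempty set, and φ: G → Sym(X) a group homomorphism. Let (X×G)_φ denote X × G with the operation (x, g)·(x', g') = (φ_g(x'), g·g'), and let (X×G)_𝟙 denote X × G with the operation (x, g)·(x', g') = (x', g·g'). Then the map η: (X×G)_𝟙 → (X×G)_φ defined by η(x, g) = (φ_g(x), g) is a semigroup isomorphism. -/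
theorem stmt_16_general {S X : Type*} [Mul S] (φ : S →ₙ* Equiv.Perm X) :
    let mulφ : X × S → X × S → X × S := fun p q => (φ p.2 q.1, p.2 * q.2)
    let mul1 : X × S → X × S → X × S := fun p q => (q.1, p.2 * q.2)
    let η : X × S → X × S := fun p => (φ p.2 p.1, p.2)
    Function.Bijective η ∧ ∀ p q : X × S, η (mul1 p q) = mulφ (η p) (η q) := by
  intro mulφ mul1 η
  have η_bijective : Function.Bijective η := (Equiv.prodCongrLeft φ).bijective
  have η_mul (p q : X × S) : η (mul1 p q) = mulφ (η p) (η q) := by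
    have map_mul_apply : φ (p.2 * q.2) q.1 = φ p.2 (φ q.2 q.1) := by
      rw [map_mul, Equiv.Perm.mul_apply]
    exact Prod.ext map_mul_apply rfl
  exact ⟨η_bijective, η_mul⟩

/-- Proposition: for a group `G`, a nonempty set `X` and a group homomorphism
`φ : G → Sym(X)`, the map `η(x, g) = (φ_g(x), g)` is a semigroup isomorphism from
`(X×G)_𝟙` (operation `(x,g)·(x',g') = (x', g·g')`) onto `(X×G)_φ` (operation
`(x,g)·(x',g') = (φ_g(x'), g·g')`). -/
theorem stmt_16 (G : Type*) [Group G] (X : Type*) [Nonempty X]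
    (φ : G →* Equiv.Perm X) :
    let mulφ : X × G → X × G → X × G := fun p q => (φ p.2 q.1, p.2 * q.2)
    let mul1 : X × G → X × G → X × G := fun p q => (q.1, p.2 * q.2)
    let η : X × G → X × G := fun p => (φ p.2 p.1, p.2)
    Function.Bijective η ∧ ∀ p q : X × G, η (mul1 p q) = mulφ (η p) (η q) :=
  stmt_16_general (φ : G →ₙ* Equiv.Perm X)
end
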